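/- For all integers m, n with 2 ≤ m ≤ n, the 3-Sudoku number of the complete bipartite graph K_{m,n} equals m, i.e. sn(K_{m,n}, 3) = m. -/

import Mathlib

/-!
Upper bound: give the `m` vertices of the smaller side both of the colors `0` and `1` (possible
as `2 ≤ m`); every vertex of the other side is then forced to have color `2`.

Lower bound: if a prescription on `S` extends uniquely to `C`, then an unprescribed vertex `v`
cannot be recolored, so every color other than `C v` occurs on a neighbor of `v`
(`exists_adj_of_unique`). If `S.card < m ≤ n`, there are adjacent unprescribed vertices `u`, `w`
on the two sides. With three colors some color `c` differs from both `C u` and `C w`, so it occurs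
on a neighbor of `u` and on a neighbor of `w`; these lie on opposite sides, hence are adjacent,
which is impossible.
-/

open SimpleGraph

/-- The `k`-Sudoku number `sn(G,k)`: the least cardinality of a set `S` of vertices of `G`
admitting a partial proper `k`-coloring that extends uniquely to a proper `k`-coloring of `G`. -/
noncomputable def sudokuNumber {V : Type*} [Fintype V] (G : SimpleGraph V) (k : ℕ) : ℕ :=
  sInf {m | ∃ S : Finset V, S.card = m ∧ ∃ C0 : V → Fin k,
    ∃! C : G.Coloring (Fin k), ∀ v ∈ S, C v = C0 v}

/-- If `C` is the only coloring agreeing with itself on `S`, a vertex outside `S` sees every color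
but its own: otherwise it could be recolored. -/
lemma exists_adj_of_unique {V : Type*} {k : ℕ} {G : SimpleGraph V} {S : Finset V}
    (C : G.Coloring (Fin k))
    (huniq : ∀ D : G.Coloring (Fin k), (∀ v ∈ S, D v = C v) → D = C)
    {u : V} (hu : u ∉ S) {c : Fin k} (hc : c ≠ C u) : ∃ x, G.Adj u x ∧ C x = c := by
  classical
  by_contra! h
  let D : G.Coloring (Fin k) := SimpleGraph.Coloring.mk (Function.update C u c) (by
    intro a b hab
    by_cases ha : a = u
    · subst ha
      rw [Function.update_self, Function.update_of_ne hab.ne']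
      exact (h b hab).symm
    · by_cases hb : b = u
      · subst hb
        rw [Function.update_self, Function.update_of_ne ha]
        exact h a hab.symm
      · rw [Function.update_of_ne ha, Function.update_of_ne hb]
        exact C.valid hab)
  have hD : ∀ v, D v = Function.update C u c v := fun _ => rfl
  have hDC := huniq D (fun v hv => by
    rw [hD, Function.update_of_ne (ne_of_mem_of_not_mem hv hu)])
  apply hc
  rw [← hDC, hD, Function.update_self]

/-- For all integers `m, n` with `2 ≤ m ≤ n`, `sn(K_{m,n}, 3) = m`. -/
theorem sudokuNumber_completeBipartite_three (m n : ℕ) (hm : 2 ≤ m) (hmn : m ≤ n) :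
    sudokuNumber (completeBipartiteGraph (Fin m) (Fin n)) 3 = m := by
  classical
  let a : Fin m := ⟨0, by omega⟩
  let b : Fin m := ⟨1, by omega⟩
  have hba : b ≠ a := by simp [a, b]
  have hmem : m ∈ {m' | ∃ S : Finset (Fin m ⊕ Fin n), S.card = m' ∧ ∃ C0 : Fin m ⊕ Fin n → Fin 3,
      ∃! C : (completeBipartiteGraph (Fin m) (Fin n)).Coloring (Fin 3),
        ∀ v ∈ S, C v = C0 v} := by
    let f : Fin m ⊕ Fin n → Fin 3 := Sum.elim (fun i => if i = a then 0 else 1) (fun _ => 2)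
    have hl : ∀ i, f (Sum.inl i) = if i = a then 0 else 1 := fun _ => rfl
    have hr : ∀ j, f (Sum.inr j) = 2 := fun _ => rfl
    refine ⟨Finset.univ.map Function.Embedding.inl, by simp, f,
      SimpleGraph.Coloring.mk f ?_, fun v _ => rfl, ?_⟩
    · rintro (i | i) (j | j) hij
      · simp at hij
      · rw [hl, hr]; split_ifs <;> decide
      · rw [hl, hr]; split_ifs <;> decide
      · simp at hij
    · intro C hC
      have hC' : ∀ i, C (Sum.inl i) = f (Sum.inl i) := fun i => hC _ (by simp)
      ext1 v
      change C v = f v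
      rcases v with i | j
      · exact hC' i
      · have h0 : C (Sum.inl a) ≠ C (Sum.inr j) := C.valid (by simp)
        have h1 : C (Sum.inl b) ≠ C (Sum.inr j) := C.valid (by simp)
        rw [hC', hl, if_pos rfl] at h0
        rw [hC', hl, if_neg hba] at h1
        rw [hr]
        generalize C (Sum.inr j) = x at h0 h1
        revert x
        decide
  refine le_antisymm (Nat.sInf_le hmem) (le_csInf ⟨m, hmem⟩ ?_)
  rintro s ⟨S, rfl, C0, C, hC, hun⟩
  by_contra! hlt
  have huniq : ∀ D : (completeBipartiteGraph (Fin m) (Fin n)).Coloring (Fin 3),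
      (∀ v ∈ S, D v = C v) → D = C :=
    fun D hD => hun D fun v hv => (hD v hv).trans (hC v hv)
  obtain ⟨u, hu⟩ : ∃ i : Fin m, Sum.inl i ∉ S := by
    by_contra! h
    have := Finset.card_le_card (s := Finset.univ.map Function.Embedding.inl) (t := S)
      (fun v hv => by
        obtain ⟨i, -, rfl⟩ := Finset.mem_map.1 hv
        exact h i)
    simp at this
    omega
  obtain ⟨w, hw⟩ : ∃ j : Fin n, Sum.inr j ∉ S := by
    by_contra! h
    have := Finset.card_le_card (s := Finset.univ.map Function.Embedding.inr) (t := S)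
      (fun v hv => by
        obtain ⟨i, -, rfl⟩ := Finset.mem_map.1 hv
        exact h i)
    simp at this
    omega
  obtain ⟨c, hcu, hcw⟩ : ∃ c, c ≠ C (Sum.inl u) ∧ c ≠ C (Sum.inr w) := by
    generalize C (Sum.inl u) = x
    generalize C (Sum.inr w) = y
    revert x y
    decide
  obtain ⟨x, hx, hxc⟩ := exists_adj_of_unique C huniq hu hcu
  obtain ⟨y, hy, hyc⟩ := exists_adj_of_unique C huniq hw hcw
  rcases x with x | x
  · simp at hx
  rcases y with y | y
  · exact C.valid (show (completeBipartiteGraph (Fin m) (Fin n)).Adj (Sum.inl y) (Sum.inr x) by simp)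
      (hyc.trans hxc.symm)
  · simp at hy
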